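/- (Uniform control of large spins under ξ⁺ boundary conditions.) Let G = (V,E), o, J (reasonable and ferromagnetic with function f, exponent r, constant c ∈ (0,1)), β ≥ 0, ρ and c₀ be as follows: G infinite connected with all degrees finite; J reasonable ferromagnetic; ρ a measure on ℝ with 0 < ∫ e^{a|u|²}dρ(u) < ∞ for all a > 0; and f(k^{−r}) ≥ c₀ √( log|B_{k+j}(o)| / log|B_j(o)| ) for all integers j, k ≥ 1. Let ξ⁺_x = √(log|B_{d_G(o,x)}(o)|). For finite Λ' ⊂ Λ ⊂ V define the event F_{Λ,Λ'} = { φ ∈ ℝ^Λ : |φ_x| ≤ ξ⁺_x for all x ∈ Λ ∖ Λ' }. Then ν^{ξ⁺}_{Λ,β,ρ,J}[F_{Λ,Λ'}^c] → 0 uniformly in Λ ⊇ Λ' as Λ' ↗ V; that is, for every ε > 0 there exists a finite Λ₀ ⊂ V such that for every finite Λ' ⊇ Λ₀ and every finite Λ ⊇ Λ', ν^{ξ⁺}_{Λ,β,ρ,J}[F_{Λ,Λ'}^c] < ε. -/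

import Mathlib

open MeasureTheory
open scoped ENNReal Classical

/-- The Hamiltonian `-H^ξ_{Λ,J}` (already multiplied by `β`). -/
noncomputable def hamil {V : Type*} (J : V → V → ℝ) (β : ℝ) (Λ : Finset V)
    (ξ : V → ℝ) (φ : ↥Λ → ℝ) : ℝ :=
  β * ((1 / 2) * ∑ x : ↥Λ, ∑ y : ↥Λ,
      (if x.1 ≠ y.1 then J x.1 y.1 * φ x * φ y else 0)
    + ∑ x : ↥Λ, φ x * ∑' y : {y : V // y ∉ Λ}, J x.1 y.1 * ξ y.1)

/-- The finite-volume Gibbs measure `ν^ξ_{Λ,β,ρ,J}` on `ℝ^Λ`. -/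
noncomputable def gibbs {V : Type*} (J : V → V → ℝ) (β : ℝ) (ρ : Measure ℝ)
    (Λ : Finset V) (ξ : V → ℝ) : Measure (↥Λ → ℝ) :=
  (((Measure.pi fun _ : ↥Λ => ρ).withDensity
      fun φ => ENNReal.ofReal (Real.exp (hamil J β Λ ξ φ))) Set.univ)⁻¹ •
    (Measure.pi fun _ : ↥Λ => ρ).withDensity
      fun φ => ENNReal.ofReal (Real.exp (hamil J β Λ ξ φ))

/-!
Given the other spins, the spin at `x` has density proportional to `exp (u h)` with respect to `ρ`,
where `h` is its local field. Young's inequality therefore bounds the conditional expectation of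
`exp (a φ x ^ 2)` by that of `exp (C + b h ^ 2)`, with `b` as small as we please. The profile `ξ⁺`
varies so slowly along the couplings (this is what the growth condition on `f` says) that
Cauchy–Schwarz with the weights `f (J x y)` gives
`h ^ 2 ≤ ∑ y, q x y * φ y ^ 2 + D * ξ⁺ x ^ 2` with `q` summable in `y`. For small `b`, Hölder's
inequality turns this into `L x ≤ C + b D ξ⁺ x ^ 2 + ∑ y, p x y * L y` for
`L x = log 𝔼 exp (a φ x ^ 2)` with `∑ y, p x y ≤ 1 / 2`, and the maximum principle for `L - ξ⁺ ^ 2`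
yields `L x ≤ C + ξ⁺ x ^ 2`, uniformly in the volume. With `a = 3`, the spin at `x` exceeds `ξ⁺ x`
with probability at most a constant times `exp (-2 ξ⁺ x ^ 2) = |B_{d(o, x)}(o)| ^ (-2)`, which is
summable over `x`.
-/

section LargeSpins

open ProbabilityTheory Matrix
open Real (exp exp_pos log sqrt)

section SingleSite

/-- The measure `ρ` has Gaussian exponential moments of every order. Orders `a ≤ 0` are included, so
that a measure of this kind is finite (`a = 0`). -/
def HasGaussianMoments (ρ : Measure ℝ) : Prop :=
  ∀ a : ℝ, Integrable (fun u => exp (a * u ^ 2)) ρ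

/-- For a spin of law proportional to `exp (u * h) ∂ρ(u)`, where `h` is an arbitrary field, the
expectation of `exp (a * u ^ 2)` is at most `exp (C + b * h ^ 2)`. The normalisation is multiplied
out. -/
def FieldControlsSquare (ρ : Measure ℝ) (a b C : ℝ) : Prop :=
  ∀ h : ℝ, ∫⁻ u, ENNReal.ofReal (exp (a * u ^ 2 + u * h)) ∂ρ ≤
    ∫⁻ u, ENNReal.ofReal (exp (C + b * h ^ 2 + u * h)) ∂ρ

variable {ρ : Measure ℝ}

lemma hasGaussianMoments_of_lintegral_lt_top
    (h : ∀ a : ℝ, 0 < a → ∫⁻ u, ENNReal.ofReal (exp (a * u ^ 2)) ∂ρ < ⊤) :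
    HasGaussianMoments ρ := by
  intro a
  have hpos : Integrable (fun u => exp (max a 1 * u ^ 2)) ρ := by
    refine ⟨by fun_prop, ?_⟩
    rw [hasFiniteIntegral_iff_ofReal (ae_of_all _ fun u => (exp_pos _).le)]
    exact h _ (lt_max_of_lt_right one_pos)
  refine hpos.mono' (by fun_prop) (ae_of_all _ fun u => ?_)
  rw [Real.norm_of_nonneg (exp_pos _).le]
  gcongr
  exact le_max_left a 1

lemma HasGaussianMoments.isFiniteMeasure (hρ : HasGaussianMoments ρ) : IsFiniteMeasure ρ := by
  simpa [integrable_const_iff] using hρ 0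

lemma ofReal_exp_add (s t : ℝ) :
    ENNReal.ofReal (exp (s + t)) = ENNReal.ofReal (exp s) * ENNReal.ofReal (exp t) := by
  rw [Real.exp_add, ENNReal.ofReal_mul (exp_pos s).le]

lemma lintegral_ofReal_exp_mono {α : Type*} [MeasurableSpace α] {μ : Measure α} {X Y : α → ℝ}
    (h : ∀ ω, X ω ≤ Y ω) :
    ∫⁻ ω, ENNReal.ofReal (exp (X ω)) ∂μ ≤ ∫⁻ ω, ENNReal.ofReal (exp (Y ω)) ∂μ :=
  lintegral_mono fun ω => ENNReal.ofReal_le_ofReal (Real.exp_le_exp.2 (h ω))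

lemma lintegral_ofReal_exp_add {α : Type*} [MeasurableSpace α] (μ : Measure α) {X : α → ℝ}
    (hX : Integrable (fun ω => exp (X ω)) μ) (s : ℝ) :
    ∫⁻ ω, ENNReal.ofReal (exp (s + X ω)) ∂μ =
      ENNReal.ofReal (exp s * ∫ ω, exp (X ω) ∂μ) := by
  simp_rw [ofReal_exp_add]
  rw [lintegral_const_mul' _ _ ENNReal.ofReal_ne_top, ENNReal.ofReal_mul (exp_pos s).le,
    ofReal_integral_eq_lintegral_ofReal hX (ae_of_all _ fun ω => (exp_pos _).le)]

lemma abs_mul_le_add_sq {b : ℝ} (hb : 0 < b) (h u : ℝ) :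
    |u * h| ≤ b / 2 * h ^ 2 + (2 * b)⁻¹ * u ^ 2 := by
  have young : 2 * |h| * |u| ≤ b * |h| ^ 2 + b⁻¹ * |u| ^ 2 := two_mul_le_add_mul_sq hb
  rw [sq_abs, sq_abs] at young
  rw [abs_mul, mul_inv]
  linarith

-- The field is absorbed by Young's inequality `|u h| ≤ b h² / 2 + u² / (2 b)`, so that both sides
-- are compared with integrals that do not depend on `h`; `exp C ≥ C` bounds their quotient.
lemma HasGaussianMoments.exists_fieldControlsSquare [NeZero ρ] (hρ : HasGaussianMoments ρ)
    (a : ℝ) {b : ℝ} (hb : 0 < b) :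
    ∃ C, 0 ≤ C ∧ FieldControlsSquare ρ a b C := by
  set A := ∫ u, exp ((a + (2 * b)⁻¹) * u ^ 2) ∂ρ
  set B := ∫ u, exp (-(2 * b)⁻¹ * u ^ 2) ∂ρ
  have hA : 0 < A := integral_exp_pos (hρ _)
  have hB : 0 < B := integral_exp_pos (hρ _)
  have hAB : A ≤ exp (A / B) * B := by
    rw [← div_le_iff₀ hB]
    linarith [Real.add_one_le_exp (A / B)]
  refine ⟨A / B, (div_pos hA hB).le, fun h => ?_⟩
  calc ∫⁻ u, ENNReal.ofReal (exp (a * u ^ 2 + u * h)) ∂ρ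
      ≤ ∫⁻ u, ENNReal.ofReal (exp (b / 2 * h ^ 2 + (a + (2 * b)⁻¹) * u ^ 2)) ∂ρ := by
        refine lintegral_ofReal_exp_mono fun u => ?_
        linarith [le_of_abs_le (abs_mul_le_add_sq hb h u)]
    _ = ENNReal.ofReal (exp (b / 2 * h ^ 2) * A) := lintegral_ofReal_exp_add ρ (hρ _) _
    _ ≤ ENNReal.ofReal (exp (A / B + b / 2 * h ^ 2) * B) := by
        rw [add_comm, Real.exp_add, mul_assoc]
        gcongr
    _ = ∫⁻ u, ENNReal.ofReal (exp (A / B + b / 2 * h ^ 2 + -(2 * b)⁻¹ * u ^ 2)) ∂ρ :=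
        (lintegral_ofReal_exp_add ρ (hρ _) _).symm
    _ ≤ ∫⁻ u, ENNReal.ofReal (exp (A / B + b * h ^ 2 + u * h)) ∂ρ := by
        refine lintegral_ofReal_exp_mono fun u => ?_
        linarith [neg_le_of_abs_le (abs_mul_le_add_sq hb h u)]

end SingleSite

section SpinSystem

variable {ι : Type*} [Fintype ι]

/-- The energy `½ ⟨φ, K φ⟩ + ⟨φ, g⟩` of a spin configuration `φ` with pair couplings `K` in an
external field `g`; larger energy means larger Gibbs weight. -/
noncomputable def energy (K : Matrix ι ι ℝ) (g φ : ι → ℝ) : ℝ :=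
  1 / 2 * (φ ⬝ᵥ K *ᵥ φ) + φ ⬝ᵥ g

/-- The local field `∑ y, K x y * φ y + g x` acting on the spin at `x`. -/
noncomputable def localField (K : Matrix ι ι ℝ) (g φ : ι → ℝ) (x : ι) : ℝ :=
  (K *ᵥ φ) x + g x

variable {K : Matrix ι ι ℝ} {g : ι → ℝ}

@[fun_prop]
lemma continuous_energy : Continuous (energy K g) := by
  unfold energy
  fun_prop

@[fun_prop]
lemma continuous_localField (x : ι) : Continuous fun φ => localField K g φ x := by
  unfold localField
  fun_prop

lemma localField_update_self [DecidableEq ι] (hdiag : ∀ x, K x x = 0) (φ : ι → ℝ) (x : ι) (u : ℝ) :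
    localField K g (Function.update φ x u) x = localField K g φ x := by
  unfold localField Matrix.mulVec dotProduct
  congr 1
  refine Finset.sum_congr rfl fun y _ => ?_
  rcases eq_or_ne y x with rfl | hy
  · simp [hdiag]
  · rw [Function.update_of_ne hy]

lemma energy_add_single [DecidableEq ι] (hK : K.IsSymm) (ψ : ι → ℝ) (x : ι) (u : ℝ) :
    energy K g (ψ + Pi.single x u) =
      energy K g ψ + u * localField K g ψ x + 1 / 2 * K x x * u ^ 2 := by
  have hcross : ψ ⬝ᵥ K *ᵥ Pi.single x u = u * (K *ᵥ ψ) x := by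
    rw [Matrix.dotProduct_mulVec, ← Matrix.mulVec_transpose, hK.eq, dotProduct_single, mul_comm]
  unfold energy localField
  simp only [Matrix.mulVec_add, add_dotProduct, dotProduct_add, single_dotProduct, hcross]
  rw [Matrix.mulVec_single]
  simp only [Pi.smul_apply, Matrix.col_apply, MulOpposite.smul_eq_mul_unop, MulOpposite.unop_op]
  ring

lemma energy_update [DecidableEq ι] (hK : K.IsSymm) (hdiag : ∀ x, K x x = 0) (φ : ι → ℝ) (x : ι)
    (u : ℝ) :
    energy K g (Function.update φ x u) =
      energy K g (Function.update φ x 0) + u * localField K g φ x := by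
  have hsplit : Function.update φ x u = Function.update φ x 0 + Pi.single x u := by
    ext y
    rcases eq_or_ne y x with rfl | hy
    · simp
    · simp [hy]
  rw [hsplit, energy_add_single hK, localField_update_self hdiag, hdiag]
  ring

variable (K g) in
lemma exists_energy_le : ∃ A B : ℝ, ∀ φ, energy K g φ ≤ A * ∑ x, φ x ^ 2 + B := by
  refine ⟨1 / 2 * ∑ x, ∑ y, |K x y| + 1, ∑ x, g x ^ 2, fun φ => ?_⟩
  set S := ∑ x, φ x ^ 2 with hS
  have hle : ∀ x, φ x ^ 2 ≤ S := fun x =>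
    Finset.single_le_sum (f := fun x => φ x ^ 2) (fun _ _ => sq_nonneg _) (Finset.mem_univ x)
  have hpair : φ ⬝ᵥ K *ᵥ φ ≤ (∑ x, ∑ y, |K x y|) * S := by
    simp only [dotProduct, Matrix.mulVec, Finset.mul_sum, Finset.sum_mul]
    refine Finset.sum_le_sum fun x _ => Finset.sum_le_sum fun y _ => ?_
    have hφ : |φ x * φ y| ≤ S := by
      refine abs_le.2 ⟨?_, ?_⟩ <;>
        nlinarith [hle x, hle y, sq_nonneg (φ x + φ y), sq_nonneg (φ x - φ y)]
    calc φ x * (K x y * φ y) = K x y * (φ x * φ y) := by ring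
      _ ≤ |K x y * (φ x * φ y)| := le_abs_self _
      _ = |K x y| * |φ x * φ y| := abs_mul _ _
      _ ≤ |K x y| * S := by gcongr
  have hfield : φ ⬝ᵥ g ≤ S + ∑ x, g x ^ 2 := by
    rw [hS, ← Finset.sum_add_distrib]
    refine Finset.sum_le_sum fun x _ => ?_
    nlinarith [sq_nonneg (φ x - g x), sq_nonneg (φ x), sq_nonneg (g x)]
  unfold energy
  linarith

variable {ρ : Measure ℝ}

lemma HasGaussianMoments.integrable_exp_of_le_sum_sq (hρ : HasGaussianMoments ρ)
    {X : (ι → ℝ) → ℝ} (hX : Continuous X) {A B : ℝ} (hle : ∀ φ, X φ ≤ A * ∑ x, φ x ^ 2 + B) :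
    Integrable (fun φ => exp (X φ)) (Measure.pi fun _ : ι => ρ) := by
  have := hρ.isFiniteMeasure
  have hprod : Integrable (fun φ : ι → ℝ => (∏ x, exp (A * φ x ^ 2)) * exp B)
      (Measure.pi fun _ : ι => ρ) :=
    (Integrable.fintype_prod fun _ => hρ A).mul_const _
  refine hprod.mono' (by fun_prop) (ae_of_all _ fun φ => ?_)
  rw [Real.norm_of_nonneg (exp_pos _).le, ← Real.exp_sum, ← Finset.mul_sum, ← Real.exp_add]
  exact Real.exp_le_exp.2 (hle φ)

variable (K g) in
lemma HasGaussianMoments.integrable_exp_energy (hρ : HasGaussianMoments ρ) :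
    Integrable (fun φ => exp (energy K g φ)) (Measure.pi fun _ : ι => ρ) := by
  obtain ⟨A, B, hAB⟩ := exists_energy_le K g
  exact hρ.integrable_exp_of_le_sum_sq continuous_energy hAB

lemma neZero_pi {α : ι → Type*} [∀ i, MeasurableSpace (α i)] (μ : ∀ i, Measure (α i))
    [∀ i, SigmaFinite (μ i)] [∀ i, NeZero (μ i)] : NeZero (Measure.pi μ) := by
  refine ⟨Measure.measure_univ_ne_zero.1 ?_⟩
  rw [Measure.pi_univ]
  exact Finset.prod_ne_zero_iff.2 fun i _ => Measure.measure_univ_ne_zero.2 (NeZero.ne (μ i))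

variable (K g) in
lemma HasGaussianMoments.isProbabilityMeasure_tilted_energy [NeZero ρ]
    (hρ : HasGaussianMoments ρ) :
    IsProbabilityMeasure ((Measure.pi fun _ : ι => ρ).tilted (energy K g)) := by
  have := hρ.isFiniteMeasure
  have := neZero_pi fun _ : ι => ρ
  exact isProbabilityMeasure_tilted (hρ.integrable_exp_energy K g)

variable (K g) in
lemma HasGaussianMoments.integrable_exp_sq_tilted (hρ : HasGaussianMoments ρ) {a : ℝ} (ha : 0 ≤ a)
    (x : ι) :
    Integrable (fun φ => exp (a * φ x ^ 2)) ((Measure.pi fun _ : ι => ρ).tilted (energy K g)) := by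
  rw [integrable_tilted_iff (hρ.integrable_exp_energy K g)]
  obtain ⟨A, B, hAB⟩ := exists_energy_le K g
  simp_rw [smul_eq_mul, ← Real.exp_add]
  refine hρ.integrable_exp_of_le_sum_sq (A := A + a) (B := B) (by fun_prop) fun φ => ?_
  have hx : φ x ^ 2 ≤ ∑ y, φ y ^ 2 :=
    Finset.single_le_sum (f := fun y => φ y ^ 2) (fun _ _ => sq_nonneg _) (Finset.mem_univ x)
  linarith [hAB φ, mul_le_mul_of_nonneg_left hx ha]

-- The conditional law of the spin at `x` given the others has density proportional to
-- `exp (u * localField K g φ x)` with respect to `ρ`.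
lemma lintegral_tilted_energy_le_of_update [DecidableEq ι] [SigmaFinite ρ] (hK : K.IsSymm)
    (hdiag : ∀ x, K x x = 0) (x : ι) {F G : (ι → ℝ) → ℝ≥0∞} (hF : Measurable F) (hG : Measurable G)
    (h : ∀ φ, ∫⁻ u, F (Function.update φ x u) * ENNReal.ofReal (exp (u * localField K g φ x)) ∂ρ ≤
      ∫⁻ u, G (Function.update φ x u) * ENNReal.ofReal (exp (u * localField K g φ x)) ∂ρ) :
    ∫⁻ φ, F φ ∂(Measure.pi fun _ => ρ).tilted (energy K g) ≤
      ∫⁻ φ, G φ ∂(Measure.pi fun _ => ρ).tilted (energy K g) := by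
  rw [lintegral_tilted, lintegral_tilted]
  refine lintegral_le_of_lmarginal_le {x} (by fun_prop) (by fun_prop) ?_
  rw [lmarginal_singleton, lmarginal_singleton]
  intro φ
  have hweight (F : (ι → ℝ) → ℝ≥0∞) (Z u : ℝ) :
      ENNReal.ofReal (exp (energy K g (Function.update φ x u)) / Z) * F (Function.update φ x u) =
        ENNReal.ofReal (exp (energy K g (Function.update φ x 0)) / Z) *
          (F (Function.update φ x u) * ENNReal.ofReal (exp (u * localField K g φ x))) := by
    rw [energy_update hK hdiag, Real.exp_add, mul_div_right_comm,
      ENNReal.ofReal_mul' (exp_pos _).le]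
    ring
  simp_rw [hweight, lintegral_const_mul' _ _ ENNReal.ofReal_ne_top]
  exact mul_le_mul_right (h φ) _

lemma lintegral_exp_sq_tilted_le [SigmaFinite ρ] (hK : K.IsSymm) (hdiag : ∀ x, K x x = 0)
    {a b C : ℝ} (hsite : FieldControlsSquare ρ a b C) (x : ι) :
    ∫⁻ φ, ENNReal.ofReal (exp (a * φ x ^ 2)) ∂(Measure.pi fun _ => ρ).tilted (energy K g) ≤
      ∫⁻ φ, ENNReal.ofReal (exp (C + b * localField K g φ x ^ 2))
        ∂(Measure.pi fun _ => ρ).tilted (energy K g) := by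
  classical
  refine lintegral_tilted_energy_le_of_update hK hdiag x (by fun_prop) (by fun_prop) fun φ => ?_
  simp only [Function.update_self, localField_update_self hdiag, ← ofReal_exp_add]
  exact hsite _

lemma lintegral_exp_sum_mul_le_exp_sum_cgf {Ω : Type*} [MeasurableSpace Ω] {μ : Measure Ω}
    [IsProbabilityMeasure μ] {X : ι → Ω → ℝ} {t : ℝ}
    (hX : ∀ i, Integrable (fun ω => exp (t * X i ω)) μ) {p : ι → ℝ} (hp : ∀ i, 0 ≤ p i)
    (hp1 : ∑ i, p i ≤ 1) :
    ∫⁻ ω, ENNReal.ofReal (exp (∑ i, p i * (t * X i ω))) ∂μ ≤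
      ENNReal.ofReal (exp (∑ i, p i * cgf (X i) μ t)) := by
  have hprod (Y : ι → ℝ) : ENNReal.ofReal (exp (∑ i, p i * Y i)) =
      ∏ i, ENNReal.ofReal (exp (Y i)) ^ p i := by
    rw [Real.exp_sum, ENNReal.ofReal_prod_of_nonneg fun i _ => (exp_pos _).le]
    refine Finset.prod_congr rfl fun i _ => ?_
    rw [ENNReal.ofReal_rpow_of_pos (exp_pos _), ← Real.exp_mul, mul_comm]
  have hcgf (i : ι) : ENNReal.ofReal (exp (cgf (X i) μ t)) =
      ∫⁻ ω, ENNReal.ofReal (exp (t * X i ω)) ∂μ := by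
    rw [exp_cgf (hX i), mgf,
      ofReal_integral_eq_lintegral_ofReal (hX i) (ae_of_all _ fun _ => (exp_pos _).le)]
  have hölder := ENNReal.lintegral_mul_prod_norm_pow_le (μ := μ) Finset.univ (g := fun _ => 1)
    (f := fun i ω => ENNReal.ofReal (exp (t * X i ω))) (p := p) aemeasurable_const
    (fun i _ => (hX i).aemeasurable.ennreal_ofReal) (1 - ∑ i, p i) (sub_add_cancel _ _)
    (sub_nonneg.2 hp1) fun i _ => hp i
  simpa only [hprod, hcgf, ENNReal.one_rpow, one_mul, lintegral_one, measure_univ] using hölder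

lemma le_of_le_add_sum_mul {u : ι → ℝ} {p : ι → ι → ℝ} {C : ℝ} (hC : 0 ≤ C)
    (hp : ∀ x y, 0 ≤ p x y) (hp1 : ∀ x, ∑ y, p x y ≤ 1 / 2)
    (hu : ∀ x, u x ≤ C + ∑ y, p x y * u y) (x : ι) : u x ≤ 2 * C := by
  obtain ⟨m, -, hm⟩ := Finset.exists_max_image Finset.univ u ⟨x, Finset.mem_univ x⟩
  have hmax : u m ≤ C + (∑ y, p m y) * max (u m) 0 := by
    refine (hu m).trans ?_
    rw [Finset.sum_mul]
    gcongr with y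
    · exact hp m y
    · exact (hm y (Finset.mem_univ y)).trans (le_max_left _ _)
  have hhalf := mul_le_mul_of_nonneg_right (hp1 m) (le_max_right (u m) 0)
  rcases max_cases (u m) 0 with ⟨h, _⟩ | ⟨h, _⟩ <;> rw [h] at hmax hhalf <;>
    linarith [hm x (Finset.mem_univ x)]

end SpinSystem

section AdmissibleScale

/-- A profile `ζ` on the scale of which spins coupled through `K` can be controlled: the couplings
are summable against weights `w`, uniformly with bound `M`, and along a coupling from `x` to `y` the
profile grows by at most the factor `w x y`. -/
structure IsAdmissibleScale {V : Type*} (K : Matrix V V ℝ) (w : V → V → ℝ) (ζ : V → ℝ) (M : ℝ) :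
    Prop where
  one_le_weight : ∀ x y, 1 ≤ w x y
  summable : ∀ x, Summable fun y => |K x y| * w x y
  tsum_le : ∀ x, ∑' y, |K x y| * w x y ≤ M
  nonneg : ∀ x, 0 ≤ ζ x
  le_mul : ∀ x y, K x y ≠ 0 → ζ y ≤ w x y * ζ x

namespace IsAdmissibleScale

variable {V : Type*} {K : Matrix V V ℝ} {w : V → V → ℝ} {ζ : V → ℝ} {M : ℝ}

lemma weight_pos (hζ : IsAdmissibleScale K w ζ M) (x y : V) : 0 < w x y :=
  one_pos.trans_le (hζ.one_le_weight x y)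

lemma abs_mul_weight_nonneg (hζ : IsAdmissibleScale K w ζ M) (x y : V) : 0 ≤ |K x y| * w x y :=
  mul_nonneg (abs_nonneg _) (hζ.weight_pos x y).le

lemma bound_nonneg (hζ : IsAdmissibleScale K w ζ M) (x : V) : 0 ≤ M :=
  (tsum_nonneg fun y => hζ.abs_mul_weight_nonneg x y).trans (hζ.tsum_le x)

lemma abs_mul_le (hζ : IsAdmissibleScale K w ζ M) (x y : V) :
    |K x y| * ζ y ≤ |K x y| * w x y * ζ x := by
  rcases eq_or_ne (K x y) 0 with h0 | h0
  · simp [h0]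
  · rw [mul_assoc]
    exact mul_le_mul_of_nonneg_left (hζ.le_mul x y h0) (abs_nonneg _)

lemma submatrix {W : Type*} (hζ : IsAdmissibleScale K w ζ M) {e : W → V}
    (he : Function.Injective e) :
    IsAdmissibleScale (K.submatrix e e) (fun x y => w (e x) (e y)) (fun x => ζ (e x)) M where
  one_le_weight _ _ := hζ.one_le_weight _ _
  summable x := (hζ.summable (e x)).comp_injective he
  tsum_le x := (tsum_comp_le_tsum_of_inj (hζ.summable (e x))
    (fun _ => hζ.abs_mul_weight_nonneg _ _) he).trans (hζ.tsum_le (e x))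
  nonneg _ := hζ.nonneg _
  le_mul _ _ := hζ.le_mul _ _

lemma abs_tsum_mul_le (hζ : IsAdmissibleScale K w ζ M) {ξ : V → ℝ} (hξ : ∀ x, |ξ x| ≤ ζ x)
    (s : Set V) (x : V) : |∑' y : s, K x y * ξ y| ≤ M * ζ x := by
  have hsum : Summable fun y : s => |K x y| * w x y * ζ x :=
    ((hζ.summable x).comp_injective Subtype.val_injective).mul_right _
  calc |∑' y : s, K x y * ξ y| ≤ ∑' y : s, |K x y| * w x y * ζ x := by
        refine tsum_of_norm_bounded (f := fun y : s => K x y * ξ y) hsum.hasSum fun y => ?_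
        rw [norm_mul, Real.norm_eq_abs, Real.norm_eq_abs]
        exact (mul_le_mul_of_nonneg_left (hξ y) (abs_nonneg _)).trans (hζ.abs_mul_le x y)
    _ = (∑' y : s, |K x y| * w x y) * ζ x := tsum_mul_right
    _ ≤ M * ζ x := by
        refine mul_le_mul_of_nonneg_right ?_ (hζ.nonneg x)
        exact (tsum_comp_le_tsum_of_inj (hζ.summable x) (hζ.abs_mul_weight_nonneg x)
          Subtype.val_injective).trans (hζ.tsum_le x)

end IsAdmissibleScale

namespace IsAdmissibleScale

variable {ι : Type*} [Fintype ι] {K : Matrix ι ι ℝ} {w : ι → ι → ℝ} {ζ g : ι → ℝ} {M : ℝ}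

lemma sum_le (hζ : IsAdmissibleScale K w ζ M) (x : ι) : ∑ y, |K x y| * w x y ≤ M := by
  simpa only [tsum_fintype] using hζ.tsum_le x

lemma sum_abs_div_weight_le (hζ : IsAdmissibleScale K w ζ M) (x : ι) :
    ∑ y, |K x y| / w x y ≤ M :=
  (Finset.sum_le_sum fun y _ => (div_le_self (abs_nonneg _) (hζ.one_le_weight x y)).trans
    (le_mul_of_one_le_right (abs_nonneg _) (hζ.one_le_weight x y))).trans (hζ.sum_le x)

lemma sum_abs_div_weight_mul_sq_le (hζ : IsAdmissibleScale K w ζ M) (x : ι) :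
    ∑ y, |K x y| / w x y * ζ y ^ 2 ≤ M * ζ x ^ 2 := by
  refine (Finset.sum_le_sum fun y _ => ?_).trans ((Finset.sum_mul _ _ _).symm.trans_le
    (mul_le_mul_of_nonneg_right (hζ.sum_le x) (sq_nonneg _)))
  have hw := hζ.weight_pos x y
  rcases eq_or_ne (K x y) 0 with h0 | h0
  · simp [h0]
  · calc |K x y| / w x y * ζ y ^ 2 ≤ |K x y| / w x y * (w x y * ζ x) ^ 2 := by
          gcongr
          exacts [hζ.nonneg y, hζ.le_mul x y h0]
      _ = |K x y| * w x y * ζ x ^ 2 := by field_simp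

lemma mulVec_sq_le (hζ : IsAdmissibleScale K w ζ M) (φ : ι → ℝ) (x : ι) :
    (K *ᵥ φ) x ^ 2 ≤ M * ∑ y, |K x y| / w x y * φ y ^ 2 := by
  have hq (y : ι) : 0 ≤ |K x y| / w x y * φ y ^ 2 :=
    mul_nonneg (div_nonneg (abs_nonneg _) (hζ.weight_pos x y).le) (sq_nonneg _)
  calc (K *ᵥ φ) x ^ 2 ≤ (∑ y, |K x y| * w x y) * ∑ y, |K x y| / w x y * φ y ^ 2 := by
        refine Finset.sum_sq_le_sum_mul_sum_of_sq_le_mul _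
          (fun y _ => hζ.abs_mul_weight_nonneg x y) (fun y _ => hq y) fun y _ => le_of_eq ?_
        have hw := (hζ.weight_pos x y).ne'
        rw [mul_pow, ← sq_abs (K x y)]
        field_simp
    _ ≤ M * ∑ y, |K x y| / w x y * φ y ^ 2 := by
        gcongr
        exacts [Finset.sum_nonneg fun y _ => hq y, hζ.sum_le x]

lemma localField_sq_le (hζ : IsAdmissibleScale K w ζ M) (hg : ∀ x, |g x| ≤ M * ζ x) (φ : ι → ℝ)
    (x : ι) :
    localField K g φ x ^ 2 ≤
      2 * M * ∑ y, |K x y| / w x y * φ y ^ 2 + 2 * M ^ 2 * ζ x ^ 2 := by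
  have hgx : g x ^ 2 ≤ M ^ 2 * ζ x ^ 2 := by
    rw [← mul_pow]
    exact sq_le_sq' (neg_le_of_abs_le (hg x)) (le_of_abs_le (hg x))
  calc localField K g φ x ^ 2 ≤ 2 * ((K *ᵥ φ) x ^ 2 + g x ^ 2) := add_sq_le
    _ ≤ 2 * (M * ∑ y, |K x y| / w x y * φ y ^ 2 + M ^ 2 * ζ x ^ 2) := by
        gcongr
        exact hζ.mulVec_sq_le φ x
    _ = 2 * M * ∑ y, |K x y| / w x y * φ y ^ 2 + 2 * M ^ 2 * ζ x ^ 2 := by ring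

variable {ρ : Measure ℝ} {a b C : ℝ}

lemma cgf_sq_le_add_sum [NeZero ρ] (hζ : IsAdmissibleScale K w ζ M)
    (hg : ∀ x, |g x| ≤ M * ζ x) (hρ : HasGaussianMoments ρ) (hK : K.IsSymm)
    (hdiag : ∀ x, K x x = 0) (ha : 0 < a) (hb : 0 < b)
    (hsite : FieldControlsSquare ρ a b C) (hbM : 2 * b * M ^ 2 ≤ a) (x : ι) :
    cgf (fun φ => φ x ^ 2) ((Measure.pi fun _ => ρ).tilted (energy K g)) a ≤
      C + 2 * b * M ^ 2 * ζ x ^ 2 + ∑ y, 2 * b * M / a * (|K x y| / w x y) *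
        cgf (fun φ => φ y ^ 2) ((Measure.pi fun _ => ρ).tilted (energy K g)) a := by
  have := hρ.isFiniteMeasure
  set ν := (Measure.pi fun _ : ι => ρ).tilted (energy K g)
  have : IsProbabilityMeasure ν := hρ.isProbabilityMeasure_tilted_energy K g
  have hint (y : ι) : Integrable (fun φ => exp (a * φ y ^ 2)) ν :=
    hρ.integrable_exp_sq_tilted K g ha.le y
  have hM := hζ.bound_nonneg x
  have hp (y : ι) : 0 ≤ 2 * b * M / a * (|K x y| / w x y) :=
    mul_nonneg (by positivity) (div_nonneg (abs_nonneg _) (hζ.weight_pos x y).le)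
  have hp1 : ∑ y, 2 * b * M / a * (|K x y| / w x y) ≤ 1 := by
    rw [← Finset.mul_sum]
    calc 2 * b * M / a * ∑ y, |K x y| / w x y ≤ 2 * b * M / a * M := by
          gcongr
          exact hζ.sum_abs_div_weight_le x
      _ = 2 * b * M ^ 2 / a := by ring
      _ ≤ 1 := (div_le_one ha).2 hbM
  rw [← Real.exp_le_exp, exp_cgf (hint x), mgf, ← ENNReal.ofReal_le_ofReal_iff (exp_pos _).le,
    ofReal_integral_eq_lintegral_ofReal (hint x) (ae_of_all _ fun _ => (exp_pos _).le),
    ofReal_exp_add]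
  calc ∫⁻ φ, ENNReal.ofReal (exp (a * φ x ^ 2)) ∂ν
      ≤ ∫⁻ φ, ENNReal.ofReal (exp (C + b * localField K g φ x ^ 2)) ∂ν :=
        lintegral_exp_sq_tilted_le hK hdiag hsite x
    _ ≤ ∫⁻ φ, ENNReal.ofReal (exp (C + 2 * b * M ^ 2 * ζ x ^ 2 +
          ∑ y, 2 * b * M / a * (|K x y| / w x y) * (a * φ y ^ 2))) ∂ν := by
        refine lintegral_ofReal_exp_mono fun φ => ?_
        have hsum : ∑ y, 2 * b * M / a * (|K x y| / w x y) * (a * φ y ^ 2) =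
            b * (2 * M * ∑ y, |K x y| / w x y * φ y ^ 2) := by
          simp only [Finset.mul_sum]
          refine Finset.sum_congr rfl fun y _ => ?_
          field_simp
        linarith [mul_le_mul_of_nonneg_left (hζ.localField_sq_le hg φ x) hb.le]
    _ ≤ _ := by
        simp_rw [ofReal_exp_add (C + _)]
        rw [lintegral_const_mul' _ _ ENNReal.ofReal_ne_top]
        gcongr
        exact lintegral_exp_sum_mul_le_exp_sum_cgf hint hp hp1

-- The maximum principle is applied to `cgf (φ x ^ 2) - ζ x ^ 2`.
lemma cgf_sq_le [NeZero ρ] (hζ : IsAdmissibleScale K w ζ M)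
    (hg : ∀ x, |g x| ≤ M * ζ x) (hρ : HasGaussianMoments ρ) (hK : K.IsSymm)
    (hdiag : ∀ x, K x x = 0) (ha : 0 < a) (hb : 0 < b) (hC : 0 ≤ C)
    (hsite : FieldControlsSquare ρ a b C) (hbM : 2 * b * M ^ 2 * (1 + a⁻¹) ≤ 1 / 2) (x : ι) :
    cgf (fun φ => φ x ^ 2) ((Measure.pi fun _ => ρ).tilted (energy K g)) a ≤
      2 * C + ζ x ^ 2 := by
  set D := 2 * b * M ^ 2
  have hD0 : 0 ≤ D := by positivity
  have hDa : D / a ≤ 1 / 2 := by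
    rw [div_eq_mul_inv]
    linarith
  have hDle : D ≤ a := by
    rw [div_le_iff₀ ha] at hDa
    linarith
  set p : ι → ι → ℝ := fun x y => 2 * b * M / a * (|K x y| / w x y) with hpdef
  have hM := hζ.bound_nonneg x
  have hp (x y : ι) : 0 ≤ p x y :=
    mul_nonneg (by positivity) (div_nonneg (abs_nonneg _) (hζ.weight_pos x y).le)
  have hp1 (x : ι) : ∑ y, p x y ≤ 1 / 2 := by
    refine le_trans ?_ hDa
    have : D / a = 2 * b * M / a * M := by ring
    rw [← Finset.mul_sum, this]
    gcongr
    exact hζ.sum_abs_div_weight_le x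
  have hpζ (x : ι) : ∑ y, p x y * ζ y ^ 2 ≤ D / a * ζ x ^ 2 := by
    have : D / a * ζ x ^ 2 = 2 * b * M / a * (M * ζ x ^ 2) := by ring
    simp only [hpdef, mul_assoc (2 * b * M / a)]
    rw [← Finset.mul_sum, this]
    gcongr
    exact hζ.sum_abs_div_weight_mul_sq_le x
  rw [← sub_le_iff_le_add]
  refine le_of_le_add_sum_mul hC hp hp1 (u := fun x => cgf (fun φ : ι → ℝ => φ x ^ 2) _ a - ζ x ^ 2)
    (fun x => ?_) x
  simp only [mul_sub, Finset.sum_sub_distrib]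
  have hζx : D * (1 + a⁻¹) * ζ x ^ 2 ≤ ζ x ^ 2 :=
    mul_le_of_le_one_left (sq_nonneg _) (by linarith)
  rw [mul_add, mul_one, ← div_eq_mul_inv, add_mul] at hζx
  linarith [hζ.cgf_sq_le_add_sum hg hρ hK hdiag ha hb hsite hDle x, hpζ x]

end IsAdmissibleScale

end AdmissibleScale

section GibbsMeasure

/-- The couplings `β J` between distinct sites, as a matrix with zero diagonal: in `hamil` a spin
does not interact with itself. -/
noncomputable def pairCoupling {V : Type*} (β : ℝ) (J : V → V → ℝ) : Matrix V V ℝ :=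
  of fun x y => if x = y then 0 else β * J x y

/-- The external field `β ∑ y ∉ Λ, J x y * ξ y` that the boundary condition `ξ` induces in `Λ`. -/
noncomputable def boundaryField {V : Type*} (β : ℝ) (J : V → V → ℝ) (Λ : Finset V) (ξ : V → ℝ)
    (x : Λ) : ℝ :=
  β * ∑' y : {y : V // y ∉ Λ}, J x.1 y.1 * ξ y.1

variable {V : Type*} {β : ℝ} {J : V → V → ℝ} {ρ : Measure ℝ}

lemma pairCoupling_self (x : V) : pairCoupling β J x x = 0 := if_pos rfl

lemma pairCoupling_of_ne {x y : V} (h : x ≠ y) : pairCoupling β J x y = β * J x y := if_neg h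

lemma abs_pairCoupling_le (x y : V) : |pairCoupling β J x y| ≤ |β| * |J x y| := by
  rcases eq_or_ne x y with rfl | h
  · rw [pairCoupling_self, abs_zero]
    positivity
  · rw [pairCoupling_of_ne h, abs_mul]

lemma isSymm_pairCoupling (hJ : ∀ x y, J x y = J y x) : (pairCoupling β J).IsSymm := by
  ext x y
  simp only [transpose_apply, pairCoupling, of_apply, hJ y x, eq_comm (a := y)]

lemma hamil_eq_energy (Λ : Finset V) (ξ : V → ℝ) :
    hamil J β Λ ξ =
      energy ((pairCoupling β J).submatrix (↑) (↑) : Matrix Λ Λ ℝ) (boundaryField β J Λ ξ) := by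
  ext φ
  simp only [hamil, energy, boundaryField, dotProduct, mulVec, submatrix_apply, mul_add,
    Finset.mul_sum]
  congr 1
  · refine Finset.sum_congr rfl fun x _ => Finset.sum_congr rfl fun y _ => ?_
    rcases eq_or_ne x.1 y.1 with h | h
    · simp [h, pairCoupling_self]
    · rw [if_pos h, pairCoupling_of_ne h]
      ring
  · exact Finset.sum_congr rfl fun x _ => by ring

lemma inv_smul_withDensity_exp_eq_tilted {α : Type*} [MeasurableSpace α] {μ : Measure α}
    {H : α → ℝ} (hH : Integrable (fun ω => exp (H ω)) μ) :
    ((μ.withDensity fun ω => ENNReal.ofReal (exp (H ω))) Set.univ)⁻¹ •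
      μ.withDensity (fun ω => ENNReal.ofReal (exp (H ω))) = μ.tilted H := by
  rcases eq_or_ne μ 0 with rfl | hμ
  · simp
  have : NeZero μ := ⟨hμ⟩
  have hZ : 0 < ∫ ω, exp (H ω) ∂μ := integral_exp_pos hH
  rw [withDensity_apply _ .univ, Measure.restrict_univ,
    ← ofReal_integral_eq_lintegral_ofReal hH (ae_of_all _ fun ω => (exp_pos _).le),
    ← ENNReal.ofReal_inv_of_pos hZ, ← withDensity_smul' _ _ ENNReal.ofReal_ne_top]
  unfold Measure.tilted
  congr 1 with ω
  rw [Pi.smul_apply, smul_eq_mul, ← ENNReal.ofReal_mul (inv_pos.2 hZ).le, inv_mul_eq_div]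

lemma gibbs_eq_tilted (hρ : HasGaussianMoments ρ) (Λ : Finset V) (ξ : V → ℝ) :
    gibbs J β ρ Λ ξ = (Measure.pi fun _ : Λ => ρ).tilted
      (energy ((pairCoupling β J).submatrix (↑) (↑)) (boundaryField β J Λ ξ)) := by
  unfold gibbs
  rw [hamil_eq_energy]
  exact inv_smul_withDensity_exp_eq_tilted (hρ.integrable_exp_energy _ _)

variable {w : V → V → ℝ} {ζ : V → ℝ} {M : ℝ}

lemma IsAdmissibleScale.abs_boundaryField_le (hζ : IsAdmissibleScale (pairCoupling β J) w ζ M)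
    {Λ : Finset V} {ξ : V → ℝ} (hξ : ∀ x, |ξ x| ≤ ζ x) (x : Λ) :
    |boundaryField β J Λ ξ x| ≤ M * ζ x := by
  have hpair : boundaryField β J Λ ξ x =
      ∑' y : {y : V | y ∉ Λ}, pairCoupling β J x y * ξ y := by
    unfold boundaryField
    rw [← tsum_mul_left]
    refine tsum_congr fun y => ?_
    rw [pairCoupling_of_ne (ne_of_mem_of_not_mem x.2 y.2), mul_assoc]
  rw [hpair]
  exact hζ.abs_tsum_mul_le hξ _ x

lemma IsAdmissibleScale.exists_cgf_sq_gibbs_le [NeZero ρ]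
    (hζ : IsAdmissibleScale (pairCoupling β J) w ζ M) (hJ : ∀ x y, J x y = J y x)
    (hρ : HasGaussianMoments ρ) {a : ℝ} (ha : 0 < a) :
    ∃ C, ∀ (Λ : Finset V) (ξ : V → ℝ), (∀ x, |ξ x| ≤ ζ x) → ∀ x : Λ,
      cgf (fun φ => φ x ^ 2) (gibbs J β ρ Λ ξ) a ≤ C + ζ x ^ 2 := by
  set b := (4 * (M ^ 2 + 1) * (1 + a⁻¹))⁻¹
  have hb : 0 < b := by positivity
  have hbM : 2 * b * M ^ 2 * (1 + a⁻¹) ≤ 1 / 2 := by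
    have : 2 * b * (M ^ 2 + 1) * (1 + a⁻¹) = 1 / 2 := by
      simp only [b]
      field_simp
      norm_num
    refine le_trans ?_ this.le
    gcongr
    linarith
  obtain ⟨C, hC, hsite⟩ := hρ.exists_fieldControlsSquare a hb
  refine ⟨2 * C, fun Λ ξ hξ x => ?_⟩
  rw [gibbs_eq_tilted hρ]
  exact (hζ.submatrix Subtype.val_injective).cgf_sq_le (hζ.abs_boundaryField_le hξ) hρ
    ((isSymm_pairCoupling hJ).submatrix _) (fun _ => pairCoupling_self _) ha hb hC hsite hbM x

-- Chernoff bound: the exponent `3` leaves `2` after the loss of `ζ x ^ 2`.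
lemma IsAdmissibleScale.exists_gibbs_lt_abs_le [NeZero ρ]
    (hζ : IsAdmissibleScale (pairCoupling β J) w ζ M) (hJ : ∀ x y, J x y = J y x)
    (hρ : HasGaussianMoments ρ) :
    ∃ C, ∀ (Λ : Finset V) (ξ : V → ℝ), (∀ x, |ξ x| ≤ ζ x) → ∀ x : Λ,
      gibbs J β ρ Λ ξ {φ | ζ x < |φ x|} ≤ ENNReal.ofReal (exp (C - 2 * ζ x ^ 2)) := by
  obtain ⟨C, hC⟩ := hζ.exists_cgf_sq_gibbs_le hJ hρ (a := 3) (by norm_num)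
  refine ⟨C, fun Λ ξ hξ x => ?_⟩
  have hcgf := hC Λ ξ hξ x
  rw [gibbs_eq_tilted hρ] at hcgf ⊢
  set ν := (Measure.pi fun _ : Λ => ρ).tilted
    (energy ((pairCoupling β J).submatrix (↑) (↑)) (boundaryField β J Λ ξ))
  have : IsProbabilityMeasure ν := hρ.isProbabilityMeasure_tilted_energy _ _
  have hchernoff : ν.real {φ | ζ x ^ 2 ≤ φ x ^ 2} ≤
      exp (-3 * ζ x ^ 2 + cgf (fun φ => φ x ^ 2) ν 3) :=
    measure_ge_le_exp_cgf _ (by norm_num) (hρ.integrable_exp_sq_tilted _ _ (by norm_num) x)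
  calc ν {φ | ζ x < |φ x|} ≤ ν {φ | ζ x ^ 2 ≤ φ x ^ 2} := by
        refine measure_mono fun φ (hφ : ζ x < |φ x|) => ?_
        exact sq_le_sq.2 ((abs_of_nonneg (hζ.nonneg x)).trans_le hφ.le)
    _ = ENNReal.ofReal (ν.real {φ | ζ x ^ 2 ≤ φ x ^ 2}) := (ofReal_measureReal).symm
    _ ≤ ENNReal.ofReal (exp (C - 2 * ζ x ^ 2)) := by
        refine ENNReal.ofReal_le_ofReal (hchernoff.trans (Real.exp_le_exp.2 ?_))
        linarith

end GibbsMeasure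

section Balls

variable {V : Type*} {G : SimpleGraph V} {o : V}

lemma finite_setOf_dist_le [∀ x, Finite (G.neighborSet x)] (hconn : G.Connected) (o : V) (n : ℕ) :
    {y | G.dist o y ≤ n}.Finite := by
  induction n generalizing o with
  | zero =>
    refine (Set.finite_singleton o).subset fun y (hy : G.dist o y ≤ 0) => ?_
    exact (hconn.dist_eq_zero_iff.1 (Nat.le_zero.1 hy)).symm
  | succ n ih =>
    refine (((Set.toFinite (G.neighborSet o)).biUnion fun x _ => ih x).insert o).subset
      fun y (hy : G.dist o y ≤ n + 1) => ?_
    obtain ⟨p, hp⟩ := hconn.exists_walk_length_eq_dist o y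
    cases p with
    | nil => exact Set.mem_insert o _
    | @cons _ x _ hadj q =>
      rw [SimpleGraph.Walk.length_cons] at hp
      have hxy : G.dist x y ≤ n := (SimpleGraph.dist_le q).trans (by omega)
      exact Set.mem_insert_of_mem _ (Set.mem_biUnion hadj hxy)

lemma summable_inv_ncard_sublevel_pow {α : Type*} (d : α → ℕ) (hd : ∀ n, {y | d y ≤ n}.Finite)
    {p : ℕ} (hp : 1 < p) : Summable fun x => (({y | d y ≤ d x}.ncard : ℝ) ^ p)⁻¹ := by
  have hs : Summable fun n : ℕ => (((n + 1 : ℕ) : ℝ) ^ p)⁻¹ :=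
    (summable_nat_add_iff 1).2 (Real.summable_nat_pow_inv.2 hp)
  refine summable_of_sum_le (c := ∑' n : ℕ, (((n + 1 : ℕ) : ℝ) ^ p)⁻¹)
    (fun x => by positivity) fun T => ?_
  refine le_trans ?_ (hs.sum_le_tsum (Finset.range T.card) fun n _ => by positivity)
  -- Enumerating `T` in increasing order of `d`, the sublevel set of the `n`-th element has at least
  -- `n` elements.
  induction T using Finset.induction_on_max_value d with
  | empty => simp
  | insert x T hx hmax ih =>
    have hcard : T.card + 1 ≤ {y | d y ≤ d x}.ncard := by
      rw [← Finset.card_insert_of_notMem hx, ← Set.ncard_coe_finset]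
      refine Set.ncard_le_ncard (fun y hy => ?_) (hd _)
      rcases Finset.mem_insert.1 hy with rfl | hy
      exacts [le_refl (d y), hmax y hy]
    rw [Finset.sum_insert hx, Finset.card_insert_of_notMem hx, Finset.sum_range_succ, add_comm]
    gcongr

variable (G o) in
/-- The volume `|B_n(o)|` of a ball in the graph metric. -/
noncomputable def ballCard (n : ℕ) : ℕ := {y | G.dist o y ≤ n}.ncard

lemma ballCard_mono [∀ x, Finite (G.neighborSet x)] (hconn : G.Connected) :
    Monotone (ballCard G o) := fun _ n hmn =>
  Set.ncard_le_ncard (fun _ hy => le_trans hy hmn) (finite_setOf_dist_le hconn o n)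

lemma ballCard_pos [∀ x, Finite (G.neighborSet x)] (hconn : G.Connected) (n : ℕ) :
    0 < ballCard G o n :=
  (Set.ncard_pos (finite_setOf_dist_le hconn o n)).2 ⟨o, by simp⟩

lemma one_lt_ballCard [Nontrivial V] [∀ x, Finite (G.neighborSet x)] (hconn : G.Connected) {n : ℕ}
    (hn : 1 ≤ n) : 1 < ballCard G o n := by
  obtain ⟨x, hox⟩ := hconn.preconnected.exists_adj_of_nontrivial o
  have hx : G.dist o x ≤ n := (SimpleGraph.dist_eq_one_iff_adj.2 hox).trans_le hn
  exact (Set.one_lt_ncard (finite_setOf_dist_le hconn o n)).2 ⟨o, by simp, x, hx, hox.ne⟩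

variable (G o) in
/-- `√(log |B_n(o)|)`, the order of magnitude of the largest spin expected in the ball `B_n(o)`. -/
noncomputable def sqrtLogBall (n : ℕ) : ℝ := √(log (ballCard G o n))

lemma sqrtLogBall_mono [∀ x, Finite (G.neighborSet x)] (hconn : G.Connected) :
    Monotone (sqrtLogBall G o) := by
  intro m n hmn
  unfold sqrtLogBall
  gcongr
  · exact_mod_cast ballCard_pos hconn m
  · exact_mod_cast ballCard_mono hconn hmn

lemma sqrtLogBall_pos [Nontrivial V] [∀ x, Finite (G.neighborSet x)] (hconn : G.Connected) {n : ℕ}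
    (hn : 1 ≤ n) : 0 < sqrtLogBall G o n :=
  Real.sqrt_pos.2 (Real.log_pos (by exact_mod_cast one_lt_ballCard hconn hn))

lemma exp_neg_mul_sqrtLogBall_sq [∀ x, Finite (G.neighborSet x)] (hconn : G.Connected) (p n : ℕ) :
    exp (-(p * sqrtLogBall G o n ^ 2)) = ((ballCard G o n : ℝ) ^ p)⁻¹ := by
  have hB : (1 : ℝ) ≤ ballCard G o n := by exact_mod_cast ballCard_pos hconn n
  rw [sqrtLogBall, Real.sq_sqrt (Real.log_nonneg hB), Real.exp_neg, ← Real.log_pow,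
    Real.exp_log (by positivity)]

end Balls

section MaximalBoundary

variable {V : Type*} (G : SimpleGraph V) (o : V)

/-- The boundary condition `ξ⁺`: the spin at `x` has the largest order of magnitude expected in the
ball around `o` that reaches `x`. -/
noncomputable def maximalBoundary (x : V) : ℝ := sqrtLogBall G o (G.dist o x)

/-- The profile `ξ⁺` with its value `0` at `o` raised to its value at distance `1`, so that the
ratio of two values can be controlled. -/
noncomputable def maximalScale (x : V) : ℝ := sqrtLogBall G o (max (G.dist o x) 1)

variable {G o}

lemma maximalBoundary_nonneg (x : V) : 0 ≤ maximalBoundary G o x := Real.sqrt_nonneg _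

lemma maximalBoundary_le_maximalScale [∀ x, Finite (G.neighborSet x)] (hconn : G.Connected)
    (x : V) : maximalBoundary G o x ≤ maximalScale G o x :=
  sqrtLogBall_mono hconn (le_max_left _ _)

lemma maximalScale_eq_maximalBoundary (hconn : G.Connected) {x : V} (hx : x ≠ o) :
    maximalScale G o x = maximalBoundary G o x := by
  unfold maximalScale maximalBoundary
  rw [max_eq_left (hconn.pos_dist_of_ne hx.symm)]

variable {f : ℝ → ℝ} {r c₀ : ℝ}

lemma maximalScale_le_mul [∀ x, Finite (G.neighborSet x)] (hconn : G.Connected) (hc₀ : 0 < c₀)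
    (hball : ∀ j k : ℕ, 1 ≤ j → 1 ≤ k →
      c₀ * √(log (ballCard G o (k + j)) / log (ballCard G o j)) ≤ f ((k : ℝ) ^ (-r)))
    {x y : V} (hxy : x ≠ y) :
    maximalScale G o y ≤ c₀⁻¹ * f ((G.dist x y : ℝ) ^ (-r)) * maximalScale G o x := by
  have : Nontrivial V := ⟨x, y, hxy⟩
  set j := max (G.dist o x) 1
  have hpos : 0 < sqrtLogBall G o j := sqrtLogBall_pos hconn (le_max_right _ _)
  have hgrowth : c₀ * sqrtLogBall G o (G.dist x y + j) ≤
      f ((G.dist x y : ℝ) ^ (-r)) * sqrtLogBall G o j := by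
    rw [← div_le_iff₀ hpos, mul_div_assoc, sqrtLogBall, sqrtLogBall,
      ← Real.sqrt_div' _ (Real.log_natCast_nonneg _)]
    exact hball j (G.dist x y) (le_max_right _ _) (hconn.pos_dist_of_ne hxy)
  have htriangle : max (G.dist o y) 1 ≤ G.dist x y + j := by
    have := hconn.dist_triangle (u := o) (v := x) (w := y)
    omega
  calc maximalScale G o y ≤ sqrtLogBall G o (G.dist x y + j) := sqrtLogBall_mono hconn htriangle
    _ ≤ c₀⁻¹ * (f ((G.dist x y : ℝ) ^ (-r)) * maximalScale G o x) :=
        (le_inv_mul_iff₀ hc₀).2 hgrowth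
    _ = c₀⁻¹ * f ((G.dist x y : ℝ) ^ (-r)) * maximalScale G o x := (mul_assoc _ _ _).symm

variable {J : V → V → ℝ} {Mf : ℝ}

lemma isAdmissibleScale_maximalScale [∀ x, Finite (G.neighborSet x)] (hconn : G.Connected)
    (hf1 : ∀ t, 1 ≤ f t) (hfeven : ∀ t, f (-t) = f t) (hfdec : AntitoneOn f (Set.Ioi 0))
    (hJsum : ∀ x, Summable fun y => |J x y| * f (J x y))
    (hJbound : ∀ x, ∑' y, |J x y| * f (J x y) ≤ Mf)
    (hJdist : ∀ x y, x ≠ y → |J x y| ≤ (G.dist x y : ℝ) ^ (-r)) (hc₀ : 0 < c₀)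
    (hball : ∀ j k : ℕ, 1 ≤ j → 1 ≤ k →
      c₀ * √(log (ballCard G o (k + j)) / log (ballCard G o j)) ≤ f ((k : ℝ) ^ (-r))) (β : ℝ) :
    IsAdmissibleScale (pairCoupling β J) (fun x y => max 1 c₀⁻¹ * f (J x y)) (maximalScale G o)
      (|β| * max 1 c₀⁻¹ * Mf) := by
  have hf0 (t : ℝ) : 0 ≤ f t := zero_le_one.trans (hf1 t)
  have hw0 (x y : V) : 0 ≤ max 1 c₀⁻¹ * f (J x y) := mul_nonneg (by positivity) (hf0 _)
  have hterm (x y : V) : |pairCoupling β J x y| * (max 1 c₀⁻¹ * f (J x y)) ≤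
      |β| * max 1 c₀⁻¹ * (|J x y| * f (J x y)) :=
    (mul_le_mul_of_nonneg_right (abs_pairCoupling_le x y) (hw0 x y)).trans_eq (by ring)
  have hsum (x : V) : Summable fun y => |pairCoupling β J x y| * (max 1 c₀⁻¹ * f (J x y)) :=
    .of_nonneg_of_le (fun y => mul_nonneg (abs_nonneg _) (hw0 x y)) (hterm x)
      ((hJsum x).mul_left _)
  have heven (t : ℝ) : f |t| = f t := by
    rcases abs_choice t with h | h <;> simp only [h, hfeven]
  refine ⟨fun x y => one_le_mul_of_one_le_of_one_le (le_max_left _ _) (hf1 _), hsum,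
    fun x => ?_, fun x => Real.sqrt_nonneg _, fun x y hK => ?_⟩
  · calc ∑' y, |pairCoupling β J x y| * (max 1 c₀⁻¹ * f (J x y))
        ≤ ∑' y, |β| * max 1 c₀⁻¹ * (|J x y| * f (J x y)) :=
          (hsum x).tsum_le_tsum (hterm x) ((hJsum x).mul_left _)
      _ = |β| * max 1 c₀⁻¹ * ∑' y, |J x y| * f (J x y) := tsum_mul_left
      _ ≤ |β| * max 1 c₀⁻¹ * Mf := by
          gcongr
          exact hJbound x
  · have hxy : x ≠ y := by
      rintro rfl
      exact hK (pairCoupling_self x)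
    rw [pairCoupling_of_ne hxy] at hK
    have hJ0 : 0 < |J x y| := abs_pos.2 (right_ne_zero_of_mul hK)
    have hfJ : f ((G.dist x y : ℝ) ^ (-r)) ≤ f (J x y) := by
      rw [← heven (J x y)]
      exact hfdec hJ0 (hJ0.trans_le (hJdist x y hxy)) (hJdist x y hxy)
    refine (maximalScale_le_mul hconn hc₀ hball hxy).trans ?_
    gcongr
    exacts [Real.sqrt_nonneg _, hf0 _, le_max_right _ _]

end MaximalBoundary

lemma exists_finset_forall_disjoint_tsum_lt {α : Type*} {p : α → ℝ≥0∞} (hp : ∑' x, p x ≠ ⊤)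
    {ε : ℝ≥0∞} (hε : 0 < ε) :
    ∃ s₀ : Finset α, ∀ s : Set α, Disjoint (s₀ : Set α) s → ∑' x : s, p x < ε := by
  obtain ⟨s₀, hs₀⟩ := ((ENNReal.tendsto_tsum_compl_atTop_zero hp).eventually_lt_const hε).exists
  refine ⟨s₀, fun s hs => (ENNReal.tsum_mono_subtype p ?_).trans_lt hs₀⟩
  exact fun x hx hxs => Set.disjoint_right.1 hs hx hxs

section Conclusion

variable {V : Type*} {G : SimpleGraph V} {o : V} {J : V → V → ℝ} {β : ℝ} {ρ : Measure ℝ}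
  {w : V → V → ℝ} {M : ℝ}

lemma exists_gibbs_maximalBoundary_lt_abs_le [NeZero ρ] [∀ x, Finite (G.neighborSet x)]
    (hconn : G.Connected) (hζ : IsAdmissibleScale (pairCoupling β J) w (maximalScale G o) M)
    (hJ : ∀ x y, J x y = J y x) (hρ : HasGaussianMoments ρ) :
    ∃ C, ∀ (Λ : Finset V) (x : Λ), x.1 ≠ o →
      gibbs J β ρ Λ (maximalBoundary G o) {φ | maximalBoundary G o x < |φ x|} ≤
        ENNReal.ofReal (exp C * ((ballCard G o (G.dist o x) : ℝ) ^ 2)⁻¹) := by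
  obtain ⟨C, hC⟩ := hζ.exists_gibbs_lt_abs_le hJ hρ
  refine ⟨C, fun Λ x hx => ?_⟩
  have htail := hC Λ (maximalBoundary G o) (fun y => (abs_of_nonneg
    (maximalBoundary_nonneg y)).trans_le (maximalBoundary_le_maximalScale hconn y)) x
  rw [maximalScale_eq_maximalBoundary hconn hx, sub_eq_add_neg, Real.exp_add] at htail
  rwa [← exp_neg_mul_sqrtLogBall_sq hconn]

lemma summable_inv_ballCard_pow [∀ x, Finite (G.neighborSet x)] (hconn : G.Connected) (o : V)
    {p : ℕ} (hp : 1 < p) :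
    Summable fun x => ((ballCard G o (G.dist o x) : ℝ) ^ p)⁻¹ :=
  summable_inv_ncard_sublevel_pow (G.dist o) (finite_setOf_dist_le hconn o) hp

lemma exists_forall_gibbs_exists_maximalBoundary_lt_abs_lt [NeZero ρ]
    [∀ x, Finite (G.neighborSet x)] (hconn : G.Connected)
    (hζ : IsAdmissibleScale (pairCoupling β J) w (maximalScale G o) M)
    (hJ : ∀ x y, J x y = J y x) (hρ : HasGaussianMoments ρ) {ε : ℝ≥0∞} (hε : 0 < ε) :
    ∃ Λ₀ : Finset V, ∀ Λ' Λ : Finset V, Λ₀ ⊆ Λ' →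
      gibbs J β ρ Λ (maximalBoundary G o)
        {φ | ∃ x : Λ, x.1 ∉ Λ' ∧ maximalBoundary G o x < |φ x|} < ε := by
  obtain ⟨C, hC⟩ := exists_gibbs_maximalBoundary_lt_abs_le hconn hζ hJ hρ
  set p : V → ℝ≥0∞ := fun x => ENNReal.ofReal (exp C * ((ballCard G o (G.dist o x) : ℝ) ^ 2)⁻¹)
  have hp : ∑' x, p x ≠ ⊤ :=
    ((summable_inv_ballCard_pow hconn o one_lt_two).mul_left (exp C)).tsum_ofReal_ne_top
  obtain ⟨s₀, hs₀⟩ := exists_finset_forall_disjoint_tsum_lt hp hε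
  refine ⟨insert o s₀, fun Λ' Λ hΛ' => ?_⟩
  rw [Finset.insert_subset_iff] at hΛ'
  calc gibbs J β ρ Λ (maximalBoundary G o)
        {φ | ∃ x : Λ, x.1 ∉ Λ' ∧ maximalBoundary G o x < |φ x|}
      ≤ gibbs J β ρ Λ (maximalBoundary G o)
        (⋃ x : {x : Λ // x.1 ∉ Λ'}, {φ | maximalBoundary G o x < |φ x|}) :=
        measure_mono fun φ ⟨x, hx, hφ⟩ => Set.mem_iUnion.2 ⟨⟨x, hx⟩, hφ⟩
    _ ≤ ∑' x : {x : Λ // x.1 ∉ Λ'},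
        gibbs J β ρ Λ (maximalBoundary G o) {φ | maximalBoundary G o x < |φ x|} :=
        measure_iUnion_le _
    _ ≤ ∑' x : {x : Λ // x.1 ∉ Λ'}, p x :=
        ENNReal.tsum_le_tsum fun x => hC Λ x (ne_of_mem_of_not_mem hΛ'.1 x.2).symm
    _ ≤ ∑' x : {x : V | x ∉ Λ'}, p x :=
        ENNReal.tsum_comp_le_tsum_of_injective
          (f := fun x : {x : Λ // x.1 ∉ Λ'} => (⟨x.1, x.2⟩ : {x : V | x ∉ Λ'}))
          (fun x y h => Subtype.ext (Subtype.ext (Subtype.mk.inj h))) fun x => p x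
    _ < ε := hs₀ _ (Set.disjoint_left.2 fun x hx hxΛ' => hxΛ' (hΛ'.2 hx))

end Conclusion

theorem stmt14_general {V : Type*} (G : SimpleGraph V) (hconn : G.Connected)
    [∀ x, Finite (G.neighborSet x)] (o : V) (J : V → V → ℝ) (f : ℝ → ℝ) (Mf r : ℝ)
    (hJsymm : ∀ x y, J x y = J y x) (hf1 : ∀ t, 1 ≤ f t)
    (hJsum : ∀ x, Summable fun y => |J x y| * f (J x y))
    (hJbound : ∀ x, ∑' y, |J x y| * f (J x y) ≤ Mf)
    (hJdist : ∀ x y, x ≠ y → |J x y| ≤ (G.dist x y : ℝ) ^ (-r))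
    (hfeven : ∀ t, f (-t) = f t) (hfdec : AntitoneOn f (Set.Ioi 0)) (β : ℝ) (ρ : Measure ℝ)
    (hρ : ∀ a : ℝ, 0 < a →
      0 < ∫⁻ u, ENNReal.ofReal (exp (a * u ^ 2)) ∂ρ ∧
      ∫⁻ u, ENNReal.ofReal (exp (a * u ^ 2)) ∂ρ < ⊤)
    (c₀ : ℝ) (hc₀ : 0 < c₀)
    (hball : ∀ j k : ℕ, 1 ≤ j → 1 ≤ k →
      c₀ * √(log (ballCard G o (k + j)) / log (ballCard G o j)) ≤ f ((k : ℝ) ^ (-r)))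
    (ε : ℝ) (hε : 0 < ε) :
    ∃ Λ₀ : Finset V, ∀ Λ' Λ : Finset V, Λ₀ ⊆ Λ' →
      gibbs J β ρ Λ (maximalBoundary G o)
        {φ | ∃ x : Λ, x.1 ∉ Λ' ∧ maximalBoundary G o x < |φ x|} < ENNReal.ofReal ε := by
  have hgauss := hasGaussianMoments_of_lintegral_lt_top fun a ha => (hρ a ha).2
  have : NeZero ρ := ⟨by
    rintro rfl
    simpa using (hρ 1 one_pos).1⟩
  have hζ := isAdmissibleScale_maximalScale hconn hf1 hfeven hfdec hJsum hJbound hJdist hc₀ hball β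
  exact exists_forall_gibbs_exists_maximalBoundary_lt_abs_lt hconn hζ hJsymm hgauss
    (ENNReal.ofReal_pos.2 hε)

end LargeSpins

/-- Lemma `maximal b.c lemma`: uniform control of large spins under
`ξ⁺` boundary conditions. With `G, o, J` reasonable ferromagnetic, `β ≥ 0`, `ρ`
having all Gaussian moments, and the ball-growth condition on `f`, the
`ν^{ξ⁺}_{Λ,β,ρ,J}`-probability of the complement of
`F_{Λ,Λ'} = {|φ_x| ≤ ξ⁺_x ∀ x ∈ Λ∖Λ'}` tends to `0` uniformly in `Λ ⊇ Λ'`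
as `Λ' ↗ V`. -/
theorem stmt14 {V : Type*} [Countable V] (G : SimpleGraph V) [Infinite V]
    (hconn : G.Connected) [∀ x : V, Fintype (G.neighborSet x)] (o : V)
    (J : V → V → ℝ) (f : ℝ → ℝ) (δf Mf r c : ℝ)
    (hδf : 0 < δf) (hMf : 0 < Mf) (hr : 0 < r) (hc : 0 < c) (hc1 : c < 1)
    (hJsymm : ∀ x y, J x y = J y x)
    (hferro : ∀ x y, 0 ≤ J x y)
    (hf1 : ∀ t, 1 ≤ f t)
    (hflog : ∀ t : ℝ, t ≠ 0 → |t| < δf → (Real.log (|t|⁻¹)) ^ ((1 : ℝ) / 2) ≤ f t)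
    (hJsum : ∀ x, Summable fun y => |J x y| * f (J x y))
    (hJbound : ∀ x, ∑' y, |J x y| * f (J x y) ≤ Mf)
    (hJconn : ∀ x y : V, ∃ (m : ℕ) (w : ℕ → V),
      (∀ i < m, J (w i) (w (i + 1)) ≠ 0) ∧ w 0 = x ∧ w m = y)
    (hJdist : ∀ x y : V, x ≠ y → |J x y| ≤ (G.dist x y : ℝ) ^ (-r))
    (hfeven : ∀ t, f (-t) = f t)
    (hfdec : AntitoneOn f (Set.Ioi 0))
    (hfc : ∀ t : ℝ, 0 ≤ t → c * f t ≤ f ((2 : ℝ) ^ r * t))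
    (β : ℝ) (hβ : 0 ≤ β) (ρ : Measure ℝ)
    (hρ : ∀ a : ℝ, 0 < a →
      0 < ∫⁻ u, ENNReal.ofReal (Real.exp (a * u ^ 2)) ∂ρ ∧
      ∫⁻ u, ENNReal.ofReal (Real.exp (a * u ^ 2)) ∂ρ < ⊤)
    (c₀ : ℝ) (hc₀ : 0 < c₀)
    (hball : ∀ j k : ℕ, 1 ≤ j → 1 ≤ k →
      c₀ * Real.sqrt (Real.log (({y : V | G.dist o y ≤ k + j}).ncard : ℝ) /
        Real.log (({y : V | G.dist o y ≤ j}).ncard : ℝ)) ≤ f ((k : ℝ) ^ (-r))) :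
    ∀ ε : ℝ, 0 < ε → ∃ Λ₀ : Finset V, ∀ (Λ' Λ : Finset V), Λ₀ ⊆ Λ' → Λ' ⊆ Λ →
      gibbs J β ρ Λ
          (fun x => Real.sqrt (Real.log (({y : V | G.dist o y ≤ G.dist o x}).ncard : ℝ)))
          {φ : ↥Λ → ℝ | ∃ x : ↥Λ, x.1 ∉ Λ' ∧
            Real.sqrt (Real.log (({y : V | G.dist o y ≤ G.dist o x.1}).ncard : ℝ)) <
              |φ x|} < ENNReal.ofReal ε := by
  exact fun ε hε =>
    (stmt14_general G hconn o J f Mf r hJsymm hf1 hJsum hJbound hJdist hfeven hfdec β ρ hρ c₀ hc₀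
      hball ε hε).imp fun _ h Λ' Λ hΛ' _ => h Λ' Λ hΛ'
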